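/- Let f ∈ ℂ{z} be a convergent power series (radius of convergence > 0), let (μ,K) ∈ ℚ_{>0} × ℕ* with K ∈ μℕ*, and let λ ∈ ℂ*. Then the q-Borel transform B̂_μ(f) defines an entire function that belongs to ℍ^{[λ]}_{μ,K}, and L^{[λ]}_{μ,K}(B̂_μ(f))(z) = f(z) for all z in a punctured neighborhood of 0 with z ∉ −λq^{K^{−1}ℤ}. -/

import Mathlib

/-- The Jacobi theta function `Θ_q(z) = ∑_{ℓ ∈ ℤ} q^{-ℓ(ℓ+1)/2} z^ℓ`. -/
noncomputable def theta (q z : ℂ) : ℂ := ∑' ℓ : ℤ, q ^ (-(ℓ * (ℓ + 1) / 2)) * z ^ ℓ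

/-- The real theta function `Θ_Q(x) = ∑_{ℓ ∈ ℤ} Q^{-ℓ(ℓ+1)/2} x^ℓ` for real `Q, x`;
for `Q > 1` and `x > 0` it is a positive real number. -/
noncomputable def thetaR (Q x : ℝ) : ℝ := ∑' ℓ : ℤ, Q ^ (-(ℓ * (ℓ + 1) / 2)) * x ^ ℓ

/-- Rational powers `q^α := exp(α log q)` of a complex number, via the principal logarithm. -/
noncomputable def qpow (q : ℂ) (α : ℚ) : ℂ := Complex.exp ((α : ℂ) * Complex.log q)

/-- Rational (real) powers `b^α` for a real base. -/
noncomputable def qpowR (b : ℝ) (α : ℚ) : ℝ := b ^ (α : ℝ)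

/-- The `ε`-neighborhood of the discrete `q^{1/K}`-spiral `λ q^{K⁻¹ℤ}` in `ℂ*`:
`∪_{ℓ∈K⁻¹ℤ} {z ∈ ℂ* : |z - q^ℓ λ| < ε |q^ℓ λ|}`. -/
def spiralNhd (q lam : ℂ) (K : ℕ) (ε : ℝ) : Set ℂ :=
  {z : ℂ | z ≠ 0 ∧ ∃ j : ℤ,
    ‖z - qpow q ((j : ℚ) / K) * lam‖ < ε * ‖qpow q ((j : ℚ) / K) * lam‖}

/-- Membership in the space `ℍ^{[λ]}_{μ,K}`: `f` is meromorphic on a punctured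
neighborhood of `0` in `ℂ*` and can be continued analytically to a connected domain `Ω`
containing an `ε`-neighborhood of the spiral `λ q^{K⁻¹ℤ}`, with
`q^{1/μ}`-exponential growth of order 1 at infinity:
`|f(z)| < L·Θ_{|q|^{1/μ}}(M|z|)` on `Ω`. -/
def memH (q : ℂ) (μ : ℚ) (K : ℕ) (lam : ℂ) (f : ℂ → ℂ) : Prop :=
  (∃ r > 0, MeromorphicOn f {z : ℂ | z ≠ 0 ∧ ‖z‖ < r}) ∧
  ∃ ε > 0, ∃ Ω : Set ℂ, IsOpen Ω ∧ IsConnected Ω ∧ spiralNhd q lam K ε ⊆ Ω ∧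
    AnalyticOnNhd ℂ f Ω ∧
    ∃ L > 0, ∃ M > 0, ∀ z ∈ Ω, ‖f z‖ < L * thetaR (qpowR ‖q‖ (1 / μ)) (M * ‖z‖)

/-- The `q`-Laplace transform of order `μ` in the direction `λ`:
`L^{[λ]}_{μ,K}(f)(z) = (μ/K) ∑_{ℓ∈K⁻¹ℤ} f(q^ℓ λ) / Θ_{q^{1/μ}}(q^{1/μ+ℓ} λ / z)`. -/
noncomputable def qLaplace (q : ℂ) (μ : ℚ) (K : ℕ) (lam : ℂ) (f : ℂ → ℂ) (z : ℂ) : ℂ :=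
  ((μ : ℂ) / (K : ℂ)) * ∑' j : ℤ, f (qpow q ((j : ℚ) / K) * lam) /
    theta (qpow q (1 / μ)) (qpow q (1 / μ + (j : ℚ) / K) * lam / z)

open Filter Topology

/-- triangular numbers over the integers -/
def tri (l : ℤ) : ℤ := l * (l + 1) / 2

lemma two_tri (l : ℤ) : 2 * tri l = l * (l + 1) :=
  Int.mul_ediv_cancel' (Int.even_mul_succ_self l).two_dvd

lemma tri_succ (l : ℤ) : tri (l + 1) = tri l + (l + 1) := by
  have h1 := two_tri l
  have h2 := two_tri (l + 1)
  have : 2 * tri (l + 1) = 2 * (tri l + (l + 1)) := by linear_combination h2 - h1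
  omega

lemma tri_neg_succ (l : ℤ) : tri (-(l + 1)) = tri l := by
  have h1 := two_tri l
  have h2 := two_tri (-(l + 1))
  have : 2 * tri (-(l + 1)) = 2 * tri l := by rw [h2, h1]; ring
  omega

lemma tri_sub (l i : ℤ) : tri (l - i) = tri l - i * l + tri (i - 1) := by
  have h1 := two_tri l
  have h2 := two_tri (l - i)
  have h3 := two_tri (i - 1)
  have : 2 * tri (l - i) = 2 * (tri l - i * l + tri (i - 1)) := by linear_combination h2 - h1 - h3
  omega

lemma summable_tri_nat {t x : ℝ} (ht0 : 0 < t) (ht : t < 1) (hx : 0 < x) :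
    Summable fun n : ℕ => t ^ (tri n) * x ^ (n : ℤ) := by
  apply summable_of_ratio_test_tendsto_lt_one (l := 0) zero_lt_one
  · exact Eventually.of_forall fun n => by positivity
  · have h : Tendsto (fun n : ℕ => t ^ (n + 1) * x) atTop (𝓝 (0 * x)) :=
      ((tendsto_pow_atTop_nhds_zero_of_lt_one ht0.le ht).comp (tendsto_add_atTop_nat 1)).mul_const x
    rw [zero_mul] at h
    refine h.congr fun n => ?_
    rw [Real.norm_of_nonneg (by positivity), Real.norm_of_nonneg (by positivity)]
    push_cast
    rw [tri_succ, zpow_add₀ ht0.ne', zpow_add_one₀ hx.ne', eq_div_iff (by positivity)]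
    have : t ^ ((n : ℤ) + 1) = t ^ (n + 1) := by
      rw [← zpow_natCast]; push_cast; rfl
    rw [this]; ring

lemma summable_tri {t x : ℝ} (ht0 : 0 < t) (ht : t < 1) (hx : 0 < x) :
    Summable fun l : ℤ => t ^ (tri l) * x ^ l := by
  apply Summable.of_nat_of_neg_add_one
  · exact summable_tri_nat ht0 ht hx
  · refine ((summable_tri_nat ht0 ht (inv_pos.2 hx)).mul_left x⁻¹).congr fun n => ?_
    rw [tri_neg_succ, zpow_neg, ← inv_zpow, zpow_add_one₀ (inv_pos.2 hx).ne']
    ring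

lemma summable_tri_norm {t x : ℂ} (ht0 : t ≠ 0) (ht : ‖t‖ < 1) (hx : x ≠ 0) :
    Summable fun l : ℤ => ‖t ^ (tri l) * x ^ l‖ := by
  refine (summable_tri (norm_pos_iff.2 ht0) ht (norm_pos_iff.2 hx)).congr fun l => ?_
  rw [norm_mul, norm_zpow, norm_zpow]

/-- the finite q-Pochhammer symbol `(t;t)_n` -/
noncomputable def Dq (t : ℂ) (n : ℕ) : ℂ := ∏ k ∈ Finset.range n, (1 + -t ^ (k + 1))

/-- inverse of `(t;t)_n`, extended by zero -/
noncomputable def Eq' (t : ℂ) (n : ℤ) : ℂ := if 0 ≤ n then (Dq t n.toNat)⁻¹ else 0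

lemma one_sub_pow_ne {t : ℂ} (ht : ‖t‖ < 1) (k : ℕ) : 1 + -t ^ (k + 1) ≠ 0 := by
  intro h
  have h1 : t ^ (k + 1) = 1 := by linear_combination -h
  have h2 : ‖t‖ ^ (k + 1) = 1 := by rw [← norm_pow, h1, norm_one]
  have h3 := pow_lt_one₀ (norm_nonneg t) ht (Nat.succ_ne_zero k)
  exact absurd h2 h3.ne

lemma Dq_ne {t : ℂ} (ht : ‖t‖ < 1) (n : ℕ) : Dq t n ≠ 0 :=
  Finset.prod_ne_zero_iff.2 fun k _ => one_sub_pow_ne ht k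

lemma Eq'_rec {t : ℂ} (ht : ‖t‖ < 1) (n : ℤ) : Eq' t (n - 1) = Eq' t n * (1 - t ^ n) := by
  rcases lt_trichotomy n 0 with h | h | h
  · simp [Eq', show ¬ (0 ≤ n) by omega, show ¬ (1 ≤ n) by omega]
  · subst h; simp [Eq']
  · obtain ⟨m, rfl⟩ : ∃ m : ℕ, n = m + 1 := ⟨(n - 1).toNat, by omega⟩
    have h1 : ((m : ℤ) + 1).toNat = m + 1 := by omega
    have h2 : ((m : ℤ) + 1 - 1).toNat = m := by omega
    have h3 : (t ^ ((m : ℤ) + 1)) = t ^ (m + 1) := by rw [← zpow_natCast]; push_cast; rfl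
    have h4 := one_sub_pow_ne ht m
    have h5 := Dq_ne ht m
    rw [Eq', Eq', if_pos (by omega), if_pos (by omega), h1, h2, h3, Dq, Dq, Finset.prod_range_succ,
      mul_inv, mul_assoc]
    rw [show (1 - t ^ (m + 1)) = 1 + -t ^ (m + 1) by ring, inv_mul_cancel₀ h4, mul_one]

/-- finite form of the triple product -/
lemma finite_triple {t x : ℂ} (ht0 : t ≠ 0) (ht : ‖t‖ < 1) (hx : x ≠ 0) (M N : ℕ) :
    HasSum (fun l : ℤ => (Dq t (M + N) * Eq' t (N + l) * Eq' t (M - l)) * (t ^ tri l * x ^ l))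
      ((∏ k ∈ Finset.range M, (1 + x * t ^ (k + 1))) *
        ∏ k ∈ Finset.range N, (1 + x⁻¹ * t ^ k)) := by
  induction N with
  | zero =>
    induction M with
    | zero =>
      have := hasSum_single (f := fun l : ℤ => (Dq t (0 + 0) * Eq' t ((0 : ℕ) + l) *
        Eq' t ((0 : ℕ) - l)) * (t ^ tri l * x ^ l)) 0 (by
          intro l hl
          rcases lt_or_gt_of_ne hl with h | h
          · simp [Eq', show ¬ (0 ≤ l) by omega]
          · simp [Eq', show ¬ (l ≤ 0) by omega])
      simpa [Dq, Eq', tri] using this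
    | succ M ih =>
      have ih2 := ((Equiv.subRight (1 : ℤ)).hasSum_iff).2 ih
      have := ih.add (ih2.mul_left (x * t ^ (M + 1)))
      rw [Finset.prod_range_succ]
      convert this using 1
      · funext l
        simp only [Function.comp, Equiv.subRight_apply]
        have e1 := Eq'_rec ht ((M : ℤ) + 1 - l)
        have e2 := Eq'_rec ht (((0 : ℕ) : ℤ) + l)
        have e3 : tri l = tri (l - 1) + l := by have := tri_succ (l - 1); simpa using this
        rw [show (M : ℤ) + 1 - l - 1 = M - l by ring] at e1
        rw [show ((0 : ℕ) : ℤ) + (l - 1) = (0 : ℕ) + l - 1 by ring, e2, e1,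
          show (M : ℤ) - (l - 1) = M + 1 - l by ring, e3,
          show ((M + 1 : ℕ) : ℤ) - l = M + 1 - l by push_cast; ring,
          show M + 1 + 0 = M + 0 + 1 by ring, Dq, Finset.prod_range_succ, ← Dq,
          zpow_add₀ ht0, zpow_sub_one₀ hx, zpow_sub₀ ht0,
          show (t ^ ((M : ℤ) + 1)) = t ^ (M + 1) by rw [← zpow_natCast]; push_cast; rfl]
        have := zpow_ne_zero l ht0
        simp only [Nat.cast_zero, zero_add, add_zero]
        field_simp
        ring
      · ring
  | succ N ih =>
      have ih2 := ((Equiv.addRight (1 : ℤ)).hasSum_iff).2 ih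
      have := ih.add (ih2.mul_left (x⁻¹ * t ^ N))
      rw [Finset.prod_range_succ]
      convert this using 1
      · funext l
        simp only [Function.comp, Equiv.coe_addRight]
        have e1 := Eq'_rec ht ((M : ℤ) - l)
        have e2 := Eq'_rec ht ((N : ℤ) + l + 1)
        rw [show (N : ℤ) + l + 1 - 1 = N + l by ring] at e2
        rw [show (N : ℤ) + (l + 1) = N + l + 1 by ring, e2,
          show (M : ℤ) - (l + 1) = M - l - 1 by ring, e1, tri_succ,
          show ((N + 1 : ℕ) : ℤ) + l = N + l + 1 by push_cast; ring,
          show M + (N + 1) = M + N + 1 by ring, Dq, Finset.prod_range_succ, ← Dq,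
          zpow_add₀ ht0, zpow_add_one₀ hx, zpow_sub₀ ht0, zpow_add₀ ht0, zpow_add₀ ht0,
          zpow_add₀ ht0, zpow_one, zpow_natCast, zpow_natCast]
        have := zpow_ne_zero l ht0
        field_simp
        ring
      · ring

lemma prod_tendsto {t x : ℂ} (ht : ‖t‖ < 1) (h : ∀ k : ℕ, 1 + x * t ^ k ≠ 0) :
    ∃ c : ℂ, c ≠ 0 ∧ Tendsto (fun N => ∏ k ∈ Finset.range N, (1 + x * t ^ k)) atTop (𝓝 c) := by
  have hs : Summable fun k : ℕ => ‖x * t ^ k‖ := by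
    simp only [norm_mul, norm_pow]
    exact (summable_geometric_of_lt_one (norm_nonneg _) ht).mul_left _
  exact ⟨_, tprod_one_add_ne_zero_of_summable h hs,
    (multipliable_one_add_of_summable hs).tendsto_prod_tprod_nat⟩

lemma theta_sum_ne_zero {t x : ℂ} (ht0 : t ≠ 0) (ht : ‖t‖ < 1) (hx : x ≠ 0)
    (hxt : ∀ k : ℤ, x ≠ -t ^ k) : ∑' l : ℤ, t ^ tri l * x ^ l ≠ 0 := by
  obtain ⟨c1, hc1, h1⟩ := prod_tendsto (x := x * t) ht (fun k h => hxt (-(k + 1)) (by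
    have : x * t ^ (k + 1) = -1 := by linear_combination h
    rw [zpow_neg, ← Nat.cast_succ, zpow_natCast]
    have := pow_ne_zero (k + 1) ht0
    field_simp
    assumption))
  obtain ⟨c2, hc2, h2⟩ := prod_tendsto (x := x⁻¹) ht (fun k h => hxt k (by
    rw [zpow_natCast]
    field_simp at h
    linear_combination h))
  obtain ⟨c3, hc3, h3⟩ := prod_tendsto (x := -t) ht (fun k h => one_sub_pow_ne ht k (by
    rw [pow_succ]; linear_combination h))
  have hD : Tendsto (Dq t) atTop (𝓝 c3) := by
    refine h3.congr fun N => Finset.prod_congr rfl fun k _ => by ring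
  have hDi : Tendsto (fun n => (Dq t n)⁻¹) atTop (𝓝 c3⁻¹) := hD.inv₀ hc3
  obtain ⟨U, hU⟩ := (Metric.isBounded_range_of_tendsto _ hD).exists_norm_le
  obtain ⟨V, hV⟩ := (Metric.isBounded_range_of_tendsto _ hDi).exists_norm_le
  have hU' : ∀ n, ‖Dq t n‖ ≤ U := fun n => hU _ ⟨n, rfl⟩
  have hV0 : 0 ≤ V := (norm_nonneg _).trans (hV _ ⟨0, rfl⟩)
  have hU0 : 0 ≤ U := (norm_nonneg _).trans (hU' 0)
  have hV' : ∀ n, ‖Eq' t n‖ ≤ V := fun n => by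
    rw [Eq']; split_ifs
    · exact hV _ ⟨_, rfl⟩
    · simpa using hV0
  have hE : Tendsto (Eq' t) atTop (𝓝 c3⁻¹) := by
    have : Tendsto (fun n : ℤ => (Dq t n.toNat)⁻¹) atTop (𝓝 c3⁻¹) :=
      hDi.comp (tendsto_atTop.2 fun b => (eventually_ge_atTop (b : ℤ)).mono fun n hn => by omega)
    refine this.congr' ((eventually_ge_atTop 0).mono fun n hn => ?_)
    rw [Eq', if_pos hn]
  have hlim : Tendsto (fun N : ℕ => ∑' l : ℤ, (Dq t (N + N) * Eq' t (N + l) * Eq' t (N - l)) *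
      (t ^ tri l * x ^ l)) atTop (𝓝 (∑' l : ℤ, (c3 * c3⁻¹ * c3⁻¹) * (t ^ tri l * x ^ l))) := by
    apply tendsto_tsum_of_dominated_convergence
      (bound := fun l : ℤ => (U * V * V) * ‖t ^ tri l * x ^ l‖)
    · exact (summable_tri_norm ht0 ht hx).mul_left _
    · intro l
      refine Tendsto.mul_const _ (Tendsto.mul (Tendsto.mul ?_ ?_) ?_)
      · exact hD.comp (tendsto_atTop.2 fun b => (eventually_ge_atTop b).mono fun n hn => by omega)
      · exact hE.comp (tendsto_atTop.2 fun b =>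
          (eventually_ge_atTop (b - l).toNat).mono fun n hn => by omega)
      · exact hE.comp (tendsto_atTop.2 fun b =>
          (eventually_ge_atTop (b + l).toNat).mono fun n hn => by omega)
    · refine Eventually.of_forall fun N l => ?_
      rw [norm_mul, norm_mul, norm_mul]
      gcongr
      · exact hU' _
      · exact hV' _
      · exact hV' _
  have hlim2 : Tendsto (fun N : ℕ => ∑' l : ℤ, (Dq t (N + N) * Eq' t (N + l) * Eq' t (N - l)) *
      (t ^ tri l * x ^ l)) atTop (𝓝 (c1 * c2)) := by
    refine (h1.mul h2).congr fun N => ?_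
    rw [(finite_triple ht0 ht hx N N).tsum_eq]
    congr 1
    exact Finset.prod_congr rfl fun k _ => by ring
  have := tendsto_nhds_unique hlim hlim2
  rw [tsum_mul_left] at this
  intro h0
  rw [h0, mul_zero] at this
  exact mul_ne_zero hc1 hc2 this.symm

lemma theta_eq (p z : ℂ) : theta p z = ∑' l : ℤ, (p⁻¹) ^ tri l * z ^ l := by
  simp only [theta, inv_zpow', tri]

lemma inv_norm_lt {p : ℂ} (hp : 1 < ‖p‖) : ‖p⁻¹‖ < 1 := by
  rw [norm_inv]; exact inv_lt_one_of_one_lt₀ hp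

lemma p_ne {p : ℂ} (hp : 1 < ‖p‖) : p ≠ 0 := norm_pos_iff.1 (zero_lt_one.trans hp)

lemma theta_ne_zero {p x : ℂ} (hp : 1 < ‖p‖) (hx : x ≠ 0) (h : ∀ k : ℤ, x ≠ -p ^ k) :
    theta p x ≠ 0 := by
  rw [theta_eq]
  refine theta_sum_ne_zero (inv_ne_zero (p_ne hp)) (inv_norm_lt hp) hx fun k => ?_
  rw [inv_zpow']; exact h _

lemma theta_shift {p w : ℂ} (hp : 1 < ‖p‖) (hw : w ≠ 0) (i : ℤ) :
    theta p (p ^ i * w) = p ^ tri (i - 1) * w ^ i * theta p w := by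
  have hp0 := p_ne hp
  rw [theta_eq, theta_eq, ← tsum_mul_left,
    ← (Equiv.subRight i).tsum_eq (fun l => p ^ tri (i - 1) * w ^ i * (p⁻¹ ^ tri l * w ^ l))]
  refine tsum_congr fun l => ?_
  simp only [Equiv.subRight_apply]
  rw [tri_sub l i, inv_zpow', inv_zpow', neg_add, neg_sub, zpow_add₀ hp0, zpow_sub₀ hp0, zpow_neg,
    zpow_neg, zpow_sub₀ hw, mul_zpow, ← zpow_mul]
  have := zpow_ne_zero (tri (i - 1)) hp0
  have := zpow_ne_zero (tri l) hp0
  have := zpow_ne_zero i hw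
  field_simp

lemma laplace_term {p lam z : ℂ} (hp : 1 < ‖p‖) (hlam : lam ≠ 0) (hz : z ≠ 0)
    (hth : theta p (lam / z) ≠ 0) (b : ℂ) (n : ℕ) (i : ℤ) :
    b * z ^ n * (p⁻¹ ^ tri ((n : ℤ) - 1 - i) * (lam / z) ^ ((n : ℤ) - 1 - i)) / theta p (lam / z) =
    b * p ^ (-tri ((n : ℤ) - 1)) * (p ^ i * lam) ^ n / theta p (p ^ (i + 1) * (lam / z)) := by
  have hp0 := p_ne hp
  have hw : lam / z ≠ 0 := div_ne_zero hlam hz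
  rw [theta_shift hp hw, add_sub_cancel_right, div_eq_div_iff hth
    (mul_ne_zero (mul_ne_zero (zpow_ne_zero _ hp0) (zpow_ne_zero _ hw)) hth)]
  have ht : tri ((n : ℤ) - 1 - i) = tri (n - 1) - i * n + tri i := by
    have h1 := two_tri ((n : ℤ) - 1)
    have h2 := two_tri ((n : ℤ) - 1 - i)
    have h3 := two_tri i
    have : 2 * tri ((n : ℤ) - 1 - i) = 2 * (tri (n - 1) - i * n + tri i) := by
      linear_combination h2 - h1 - h3
    omega
  rw [ht, inv_zpow', neg_add, neg_sub, zpow_add₀ hp0, zpow_sub₀ hp0, zpow_neg, zpow_neg,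
    mul_pow, ← zpow_natCast (p ^ i), ← zpow_mul, sub_sub, add_comm 1 i, zpow_sub₀ hw, zpow_natCast,
    div_pow]
  have := zpow_ne_zero (tri (n - 1)) hp0
  have := zpow_ne_zero (tri i) hp0
  have := zpow_ne_zero (i + 1) hw
  generalize theta p (lam / z) = T at *
  generalize hW : (lam / z) ^ (i + 1) = W at *
  field_simp

/-- reindexing of the double sum -/
def shiftEquiv : ℤ × ℕ ≃ ℕ × ℤ where
  toFun := fun x => (x.2, (x.2 : ℤ) - 1 - x.1)
  invFun := fun y => ((y.1 : ℤ) - 1 - y.2, y.1)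
  left_inv := fun x => by ext <;> simp
  right_inv := fun y => by ext <;> simp

lemma laplace_single {p lam z : ℂ} (hp : 1 < ‖p‖) (hlam : lam ≠ 0) (hz : z ≠ 0)
    (hth : theta p (lam / z) ≠ 0) {a : ℕ → ℂ} (ha : Summable fun n => ‖a n * z ^ n‖)
    (hb : ∀ ζ : ℂ, Summable fun n : ℕ => a n * p ^ (-tri ((n : ℤ) - 1)) * ζ ^ n) :
    HasSum (fun i : ℤ => (∑' n : ℕ, a n * p ^ (-tri ((n : ℤ) - 1)) * (p ^ i * lam) ^ n) /
      theta p (p ^ (i + 1) * (lam / z))) (∑' n, a n * z ^ n) := by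
  have hp0 := p_ne hp
  have hw : lam / z ≠ 0 := div_ne_zero hlam hz
  have hS := summable_tri_norm (inv_ne_zero hp0) (inv_norm_lt hp) hw
  have hA : HasSum (fun n => a n * z ^ n) (∑' n, a n * z ^ n) :=
    (Summable.of_norm (f := fun n => a n * z ^ n) ha).hasSum
  have hT : HasSum (fun l : ℤ => p⁻¹ ^ tri l * (lam / z) ^ l)
      (∑' l : ℤ, p⁻¹ ^ tri l * (lam / z) ^ l) :=
    (Summable.of_norm (f := fun l : ℤ => p⁻¹ ^ tri l * (lam / z) ^ l) hS).hasSum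
  have hM : Summable (fun x : ℕ × ℤ => (a x.1 * z ^ x.1) * (p⁻¹ ^ tri x.2 * (lam / z) ^ x.2)) :=
    summable_mul_of_summable_norm (f := fun n => a n * z ^ n)
      (g := fun l : ℤ => p⁻¹ ^ tri l * (lam / z) ^ l) ha hS
  have hprod := HasSum.mul hA hT hM
  rw [← theta_eq] at hprod
  have hprod2 := hprod.div_const (theta p (lam / z))
  rw [mul_div_cancel_right₀ _ hth] at hprod2
  have h3 : HasSum (fun x : ℤ × ℕ => a x.2 * z ^ x.2 * (p⁻¹ ^ tri ((x.2 : ℤ) - 1 - x.1) *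
      (lam / z) ^ ((x.2 : ℤ) - 1 - x.1)) / theta p (lam / z)) (∑' n, a n * z ^ n) :=
    (shiftEquiv.hasSum_iff).2 hprod2
  have h5 : (fun x : ℤ × ℕ => a x.2 * z ^ x.2 * (p⁻¹ ^ tri ((x.2 : ℤ) - 1 - x.1) *
      (lam / z) ^ ((x.2 : ℤ) - 1 - x.1)) / theta p (lam / z)) = fun x : ℤ × ℕ =>
      a x.2 * p ^ (-tri ((x.2 : ℤ) - 1)) * (p ^ x.1 * lam) ^ x.2 /
        theta p (p ^ (x.1 + 1) * (lam / z)) :=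
    funext fun x => laplace_term hp hlam hz hth (a x.2) x.2 x.1
  rw [h5] at h3
  exact h3.prod_fiberwise fun i =>
    ((hb (p ^ i * lam)).hasSum).div_const (theta p (p ^ (i + 1) * (lam / z)))

lemma qpow_add (q : ℂ) (x y : ℚ) : qpow q (x + y) = qpow q x * qpow q y := by
  simp only [qpow]; rw [← Complex.exp_add]; push_cast; ring_nf

lemma qpow_zpow (q : ℂ) (x : ℚ) (k : ℤ) : qpow q x ^ k = qpow q (k * x) := by
  simp only [qpow]; rw [← Complex.exp_int_mul]; push_cast; ring_nf

lemma qpow_ne (q : ℂ) (x : ℚ) : qpow q x ≠ 0 := Complex.exp_ne_zero _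

lemma norm_qpow {q : ℂ} (hq : 1 < ‖q‖) (x : ℚ) : ‖qpow q x‖ = qpowR ‖q‖ x := by
  rw [qpow, qpowR, Complex.norm_exp, Real.rpow_def_of_pos (by linarith)]
  have : ((x : ℂ) * Complex.log q).re = (x : ℝ) * Real.log ‖q‖ := by
    rw [← Complex.log_re, ← Complex.re_ofReal_mul]; simp
  rw [this, mul_comm]

lemma qpow_coef (q : ℂ) (μ : ℚ) (n : ℕ) :
    qpow q (-(n * (n - 1) : ℚ) / (2 * μ)) = qpow q (1 / μ) ^ (-tri ((n : ℤ) - 1)) := by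
  rw [qpow_zpow]
  congr 1
  have h : (2 : ℚ) * (tri ((n : ℤ) - 1) : ℤ) = (n - 1) * n := by
    have := two_tri ((n : ℤ) - 1)
    rw [sub_add_cancel] at this
    exact_mod_cast this
  have h2 : ((n : ℚ) * (n - 1)) = 2 * (tri ((n : ℤ) - 1) : ℤ) := by rw [h]; ring
  rw [h2]; push_cast
  rw [neg_div, mul_div_mul_left _ _ two_ne_zero]; ring

lemma summable_thetaR {Q x : ℝ} (hQ : 1 < Q) (hx : 0 ≤ x) :
    Summable fun l : ℤ => Q ^ (-tri l) * x ^ l := by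
  rcases hx.eq_or_lt with rfl | hx
  · refine summable_of_ne_finset_zero (s := {0}) fun l hl => ?_
    rw [zero_zpow l (by simpa using hl), mul_zero]
  · refine (summable_tri (inv_pos.2 (zero_lt_one.trans hQ)) (inv_lt_one_of_one_lt₀ hQ) hx).congr
      fun l => ?_
    rw [inv_zpow']

lemma borel_bound {Q ρ C r : ℝ} (hQ : 1 < Q) (hρ : 0 < ρ) (hr : 0 ≤ r) (b : ℕ → ℝ)
    (hbn : ∀ n, 0 ≤ b n) (hb : ∀ n, b n * ρ ^ n ≤ C) :
    (Summable fun n : ℕ => b n * Q ^ (-tri ((n : ℤ) - 1)) * r ^ n) ∧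
    ∑' n : ℕ, b n * Q ^ (-tri ((n : ℤ) - 1)) * r ^ n ≤ C * thetaR Q (Q / ρ * r) ∧
    0 < thetaR Q (Q / ρ * r) := by
  have hQ0 : 0 < Q := zero_lt_one.trans hQ
  have hx : 0 ≤ Q / ρ * r := by positivity
  have hS := summable_thetaR hQ hx
  have hSn : Summable fun n : ℕ => Q ^ (-tri n) * (Q / ρ * r) ^ (n : ℤ) :=
    hS.comp_injective (i := fun n : ℕ => (n : ℤ)) Nat.cast_injective
  have hle : ∀ n : ℕ, b n * Q ^ (-tri ((n : ℤ) - 1)) * r ^ n ≤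
      C * (Q ^ (-tri n) * (Q / ρ * r) ^ (n : ℤ)) := by
    intro n
    have e3 : tri n = tri ((n : ℤ) - 1) + n := by have := tri_succ ((n : ℤ) - 1); simpa using this
    have : C * (Q ^ (-tri n) * (Q / ρ * r) ^ (n : ℤ)) =
        (C / ρ ^ n) * Q ^ (-tri ((n : ℤ) - 1)) * r ^ n := by
      rw [e3, neg_add, zpow_add₀ hQ0.ne', zpow_natCast, mul_pow, div_pow, zpow_neg _ (n : ℤ),
        zpow_natCast]
      field_simp
    rw [this]
    gcongr
    rw [le_div_iff₀ (by positivity)]; exact hb n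
  have hnn : ∀ n : ℕ, 0 ≤ b n * Q ^ (-tri ((n : ℤ) - 1)) * r ^ n := fun n =>
    mul_nonneg (mul_nonneg (hbn n) (by positivity)) (by positivity)
  have hs := Summable.of_nonneg_of_le hnn hle (hSn.mul_left C)
  have hC : 0 ≤ C := le_trans (mul_nonneg (hbn 0) (by positivity)) (hb 0)
  have hth : thetaR Q (Q / ρ * r) = ∑' l : ℤ, Q ^ (-tri l) * (Q / ρ * r) ^ l := rfl
  refine ⟨hs, ?_, ?_⟩
  · calc _ ≤ ∑' n : ℕ, C * (Q ^ (-tri n) * (Q / ρ * r) ^ (n : ℤ)) :=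
        hs.tsum_le_tsum hle (hSn.mul_left C)
      _ = C * ∑' n : ℕ, (Q ^ (-tri n) * (Q / ρ * r) ^ (n : ℤ)) := tsum_mul_left
      _ ≤ _ := by
        rw [hth]
        gcongr
        exact hSn.tsum_le_tsum_of_inj (fun n : ℕ => (n : ℤ)) Nat.cast_injective
          (fun l _ => mul_nonneg (by positivity) (zpow_nonneg hx _)) (fun _ => le_rfl) hS
  · rw [hth]
    refine hS.tsum_pos (fun l => mul_nonneg (by positivity) (zpow_nonneg hx _)) 0 ?_
    simp [tri]

/-- if `f = ∑ aₙ zⁿ` is a convergent power series, then its `q`-Borel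
transform `B̂_μ(f)(ζ) = ∑ aₙ q^{-n(n-1)/(2μ)} ζⁿ` defines an entire function belonging to
`ℍ^{[λ]}_{μ,K}` for every `λ ∈ ℂ*`, and `L^{[λ]}_{μ,K}(B̂_μ(f)) = f` near `0`
off the spiral `-λq^{K⁻¹ℤ}`. -/
theorem qLaplace_qBorel_convergent (q : ℂ) (hq : 1 < ‖q‖) (μ : ℚ) (hμ : 0 < μ)
    (K : ℕ) (hK : 0 < K) (hKμ : ∃ m : ℕ, 0 < m ∧ (K : ℚ) = μ * m)
    (lam : ℂ) (hlam : lam ≠ 0) (a : ℕ → ℂ)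
    (ha : ∃ ρ : ℝ, 0 < ρ ∧ Summable fun n : ℕ => ‖a n‖ * ρ ^ n) :
    (∀ ζ : ℂ, Summable fun n : ℕ =>
      ‖a n * qpow q (-(n * (n - 1) : ℚ) / (2 * μ)) * ζ ^ n‖) ∧
    AnalyticOnNhd ℂ
      (fun ζ : ℂ => ∑' n : ℕ, a n * qpow q (-(n * (n - 1) : ℚ) / (2 * μ)) * ζ ^ n)
      Set.univ ∧
    memH q μ K lam
      (fun ζ : ℂ => ∑' n : ℕ, a n * qpow q (-(n * (n - 1) : ℚ) / (2 * μ)) * ζ ^ n) ∧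
    ∃ r > 0, ∀ z : ℂ, z ≠ 0 → ‖z‖ < r →
      (∀ j : ℤ, z ≠ -(qpow q ((j : ℚ) / K) * lam)) →
      qLaplace q μ K lam
        (fun ζ : ℂ => ∑' n : ℕ, a n * qpow q (-(n * (n - 1) : ℚ) / (2 * μ)) * ζ ^ n) z
        = ∑' n : ℕ, a n * z ^ n := by

  obtain ⟨ρ, hρ, hρs⟩ := ha
  obtain ⟨m, hm, hKm⟩ := hKμ
  set p := qpow q (1 / μ) with hp_def
  have hpn : ‖p‖ = qpowR ‖q‖ (1 / μ) := norm_qpow hq _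
  have hp : 1 < ‖p‖ := by
    rw [hpn, qpowR]
    exact Real.one_lt_rpow hq (by have : 0 < 1 / μ := by positivity
                                  exact_mod_cast this)
  have hp0 := p_ne hp
  simp only [qpow_coef, ← hp_def]
  obtain ⟨C, hC⟩ : ∃ C, ∀ n, ‖a n‖ * ρ ^ n ≤ C :=
    ⟨_, fun n => hρs.le_tsum n fun _ _ => by positivity⟩
  have hnorm : ∀ (ζ : ℂ) (n : ℕ), ‖a n * p ^ (-tri ((n : ℤ) - 1)) * ζ ^ n‖ =
      ‖a n‖ * ‖p‖ ^ (-tri ((n : ℤ) - 1)) * ‖ζ‖ ^ n := fun ζ n => by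
    rw [norm_mul, norm_mul, norm_zpow, norm_pow]
  have hB := fun r (hr : 0 ≤ r) => borel_bound hp hρ hr (fun n => ‖a n‖)
    (fun n => norm_nonneg _) hC
  have hsum : ∀ ζ : ℂ, Summable fun n : ℕ => ‖a n * p ^ (-tri ((n : ℤ) - 1)) * ζ ^ n‖ :=
    fun ζ => by simp only [hnorm]; exact (hB ‖ζ‖ (norm_nonneg _)).1
  have hdiff : Differentiable ℂ
      (fun ζ : ℂ => ∑' n : ℕ, a n * p ^ (-tri ((n : ℤ) - 1)) * ζ ^ n) := by
    intro ζ
    have hd := Complex.differentiableOn_tsum_of_summable_norm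
      (F := fun (n : ℕ) (ζ : ℂ) => a n * p ^ (-tri ((n : ℤ) - 1)) * ζ ^ n)
      (U := Metric.ball 0 (‖ζ‖ + 1)) (hB (‖ζ‖ + 1) (by positivity)).1
      (fun n => by fun_prop) Metric.isOpen_ball (fun n w hw => by
        rw [hnorm]
        have : ‖w‖ ≤ ‖ζ‖ + 1 := (mem_ball_zero_iff.1 hw).le
        gcongr)
    exact hd.differentiableAt (Metric.isOpen_ball.mem_nhds (by simp))
  have han := Complex.analyticOnNhd_univ_iff_differentiable.2 hdiff
  refine ⟨hsum, han, ⟨⟨1, one_pos, fun z _ => (han z trivial).meromorphicAt⟩, 1, one_pos,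
    Set.univ, isOpen_univ, isConnected_univ, Set.subset_univ _, han, C + 1, ?_, ‖p‖ / ρ,
    by positivity, ?_⟩, ρ, hρ, ?_⟩
  · have : 0 ≤ C := le_trans (by positivity) (hC 0)
    linarith
  · intro z _
    obtain ⟨h1, h2, h3⟩ := hB ‖z‖ (norm_nonneg _)
    rw [← hpn]
    calc _ ≤ ∑' n : ℕ, ‖a n * p ^ (-tri ((n : ℤ) - 1)) * z ^ n‖ := norm_tsum_le_tsum_norm (hsum z)
      _ = ∑' n : ℕ, ‖a n‖ * ‖p‖ ^ (-tri ((n : ℤ) - 1)) * ‖z‖ ^ n := by simp only [hnorm]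
      _ ≤ _ := h2
      _ < _ := by linarith
  · intro z hz hzr hsp
    have haz : Summable fun n => ‖a n * z ^ n‖ := by
      refine Summable.of_nonneg_of_le (fun _ => norm_nonneg _) (fun n => ?_) hρs
      rw [norm_mul, norm_pow]; gcongr
    have hK0 : (K : ℚ) ≠ 0 := by positivity
    have hm0 : (m : ℚ) ≠ 0 := by positivity
    -- exponents: `q^{(i m + r)/K} = p^i q^{r/K}`
    have hexp : ∀ (i r : ℤ), qpow q (((i * m + r : ℤ) : ℚ) / K) = p ^ i * qpow q ((r : ℚ) / K) := by
      intro i r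
      rw [hp_def, qpow_zpow, ← qpow_add]
      congr 1
      push_cast
      rw [hKm]
      field_simp
    have hone : ∀ r : Fin m, HasSum (fun i : ℤ =>
        (∑' n : ℕ, a n * p ^ (-tri ((n : ℤ) - 1)) *
          (qpow q (((i * m + (r : ℕ) : ℤ) : ℚ) / K) * lam) ^ n) /
        theta p (qpow q (1 / μ + ((i * m + (r : ℕ) : ℤ) : ℚ) / K) * lam / z))
        (∑' n, a n * z ^ n) := by
      intro r
      have hl : qpow q (((r : ℕ) : ℤ) / K) * lam ≠ 0 := mul_ne_zero (qpow_ne _ _) hlam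
      have := laplace_single hp hl hz (theta_ne_zero hp (div_ne_zero hl hz) (fun k h => by
        apply hsp (-k * m + (r : ℕ))
        rw [hexp, zpow_neg]
        rw [div_eq_iff hz] at h
        have := zpow_ne_zero k hp0
        rw [mul_assoc, h]
        field_simp)) haz (fun ζ => (hsum ζ).of_norm)
      convert this using 1
      funext i
      rw [qpow_add, hexp, ← hp_def, zpow_add_one₀ hp0]
      congr 2
      · simp only [mul_assoc]
      · ring
    set G : ℤ → ℂ := fun j => (∑' n : ℕ, a n * p ^ (-tri ((n : ℤ) - 1)) *
          (qpow q ((j : ℚ) / K) * lam) ^ n) /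
        theta p (qpow q (1 / μ + (j : ℚ) / K) * lam / z) with hG
    have : NeZero m := ⟨hm.ne'⟩
    let e : Fin m × ℤ ≃ ℤ := (Equiv.prodComm _ _).trans (Int.divModEquiv m).symm
    have he : ∀ r i, e (r, i) = i * m + (r : ℕ) := fun r i => rfl
    have hsE : Summable (G ∘ e) := by
      rw [← summable_norm_iff]
      refine (summable_prod_of_nonneg (fun _ => norm_nonneg _)).2 ⟨fun r => ?_, (hasSum_fintype _).summable⟩
      exact summable_norm_iff.2 (hone r).summable
    have h1 : HasSum (fun _ : Fin m => ∑' n, a n * z ^ n) (∑' x, (G ∘ e) x) :=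
      hsE.hasSum.prod_fiberwise fun r => hone r
    have h2 := h1.unique (hasSum_fintype _)
    simp only [Finset.sum_const, Finset.card_univ, Fintype.card_fin, nsmul_eq_mul] at h2
    have h3 : ∑' j, G j = m * ∑' n, a n * z ^ n := by
      rw [← h2]; exact (e.tsum_eq G).symm
    have h4 : (K : ℂ) = μ * m := by exact_mod_cast congrArg (fun x : ℚ => (x : ℂ)) hKm
    have hμ0 : (μ : ℂ) ≠ 0 := by exact_mod_cast hμ.ne'
    have hm0' : (m : ℂ) ≠ 0 := by exact_mod_cast hm.ne'
    rw [qLaplace]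
    change (μ : ℂ) / K * ∑' j, G j = _
    rw [h3, h4]
    field_simp
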